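/- Let n ≥ 2 and let 𝒜 be a malnormal subgroup system of F_n. Then the space ∂²(F_n,𝒜) is locally compact. -/

import Mathlib

/-!
The set `relSet A` is open in the compact space of unordered pairs of boundary points, and that
space is locally compact as the image of the compact Hausdorff space `∂F_n × ∂F_n` under an open
quotient map (`isOpenQuotientMap_sym2`).

Openness (`isOpen_relSet`) rests on closedness of limit sets and on local finiteness of the system
(`exists_short_conj`). Suppose `ξ, η ∈ ∂(gAg⁻¹)` differ at position `k`, and let `u` be the prefix
of `ξ` of length `k + 1`. The coset `gA` accumulates at both `ξ` and `η`, so it contains vertices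
of the Cayley tree inside and outside the subtree of words with prefix `u`. Any two vertices of
`gA` are joined by a chain in `gA` whose jumps have length at most `R`, the maximal length of a
generator in a finite generating set of `A`; the chain can leave the subtree only from a vertex
of length at most `k + 1 + R` (`prefix_mul`). Hence `gAg⁻¹ = hAh⁻¹` with `|h| ≤ k + 1 + R`. On the
open set of pairs that differ at position `k` the set `∂²𝒜` is therefore a finite union of closed
sets.
-/


open scoped Classical
open MeasureTheory

noncomputable section

namespace RelCurr

/-- The alphabet `𝔄 = ℬ ∪ ℬ⁻¹`: a letter is a generator together with a sign. -/
abbrev Letter (n : ℕ) := Fin n × Bool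

/-- The inverse of a letter. -/
def linv {n : ℕ} (x : Letter n) : Letter n := (x.1, !x.2)

/-- The free group of rank `n` on the basis `Fin n`. -/
abbrev F (n : ℕ) := FreeGroup (Fin n)

/-- The reduced word of an element of `F n`. -/
def rword {n : ℕ} (g : F n) : List (Letter n) := FreeGroup.toWord g

/-- The length `|g|` of the reduced word of `g`. -/
def wlen {n : ℕ} (g : F n) : ℕ := (rword g).length

/-- The single-letter element of `F n` given by a letter. -/
def letterE {n : ℕ} (b : Letter n) : F n := FreeGroup.mk [b]

/-- The conjugate subgroup `g A g⁻¹`. -/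
def conjSub {n : ℕ} (g : F n) (A : Subgroup (F n)) : Subgroup (F n) :=
  Subgroup.map (MulAut.conj g).toMonoidHom A

/-- A subgroup `A` is malnormal if `xAx⁻¹ ∩ A = {1}` for every `x ∉ A`. -/
def Malnormal {n : ℕ} (A : Subgroup (F n)) : Prop :=
  ∀ x : F n, x ∉ A → conjSub x A ⊓ A = ⊥

/-- The word metric on the Cayley tree `T`. -/
def dist' {n : ℕ} (x y : F n) : ℕ := wlen (x⁻¹ * y)

/-- The cyclically reduced length of `a`. -/
def cycLen {n : ℕ} (a : F n) : ℕ := sInf { m | ∃ h : F n, wlen (h⁻¹ * a * h) = m }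

/-- The vertex set of the minimal `A`-invariant subtree `T_A` of the Cayley tree:
the union of the axes of the nontrivial elements of `A`. -/
def treeVerts {n : ℕ} (A : Subgroup (F n)) : Set (F n) :=
  { h | ∃ a ∈ A, a ≠ 1 ∧ wlen (h⁻¹ * a * h) = cycLen a }

/-- `γ_w ⊆ S`: every prefix of the reduced word of `w` lies in the vertex set `S`. -/
def pathIn {n : ℕ} (w : F n) (S : Set (F n)) : Prop :=
  ∀ m ≤ wlen w, FreeGroup.mk ((rword w).take m) ∈ S

/-- An element is cyclically reduced if the last letter of its reduced word is not the
inverse of the first letter. -/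
def CyclicallyReduced {n : ℕ} (w : F n) : Prop :=
  ∀ x y : Letter n, (rword w).head? = some x → (rword w).getLast? = some y → y ≠ linv x

/-- `v` is a length-one extension of `w`. -/
def LengthOneExt {n : ℕ} (w v : F n) : Prop :=
  ∃ b : Letter n, v = w * letterE b ∧ wlen v = wlen w + 1

/-- `a` is an extension of `w`: the reduced word of `w` is a proper prefix of that of `a`. -/
def ExtensionOf {n : ℕ} (w a : F n) : Prop :=
  rword w <+: rword a ∧ wlen w < wlen a

/-- `g` is a proper power. -/
def IsProperPower {n : ℕ} (g : F n) : Prop := ∃ (h : F n) (k : ℕ), 2 ≤ k ∧ g = h ^ k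

section System

variable {n r : ℕ} (A : Fin r → Subgroup (F n))

/-- `[B] ∈ 𝒜`, i.e. `B` is a conjugate of one of the subgroups of the system. -/
def InSystem (B : Subgroup (F n)) : Prop := ∃ (i : Fin r) (g : F n), B = conjSub g (A i)

/-- The family `A` represents a subgroup system: finite rank subgroups distinct
from `{1}` and `F n`. -/
def IsSystem : Prop := (∀ i, (A i).FG) ∧ (∀ i, A i ≠ ⊥) ∧ (∀ i, A i ≠ ⊤)

/-- The subgroup system is malnormal. -/
def SystemMalnormal : Prop :=
  (∀ i, Malnormal (A i)) ∧
  ∀ B₁ B₂ : Subgroup (F n), InSystem A B₁ → InSystem A B₂ → B₁ ≠ B₂ → B₁ ⊓ B₂ = ⊥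

/-- `g` is `𝒜`-peripheral: trivial or contained in a conjugate of one of the `A i`. -/
def Peripheral (g : F n) : Prop := g = 1 ∨ ∃ B, InSystem A B ∧ g ∈ B

/-- The diameter of the intersection of the trees of two distinct subgroups of the
system is at most `L`. -/
def DiamBound (L : ℕ) : Prop :=
  ∀ B₁ B₂ : Subgroup (F n), InSystem A B₁ → InSystem A B₂ → B₁ ≠ B₂ →
    ∀ x ∈ treeVerts B₁ ∩ treeVerts B₂, ∀ y ∈ treeVerts B₁ ∩ treeVerts B₂, dist' x y ≤ L

/-- `B ∈ Γ_i`: `B` is a conjugate of `A i` whose tree contains the base point `1`. -/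
def GammaMem (i : Fin r) (B : Subgroup (F n)) : Prop :=
  (∃ g : F n, B = conjSub g (A i)) ∧ (1 : F n) ∈ treeVerts B

/-- The finite set `𝒞` of words of length `L+2` whose path is contained in no tree
`T_B` with `B ∈ Γ_i`, for every `i`. -/
def Ccal (L : ℕ) : Set (F n) :=
  { w | wlen w = L + 2 ∧ ∀ (i : Fin r) (B : Subgroup (F n)), GammaMem A i B →
      ¬ pathIn w (treeVerts B) }

/-- `F_n − 𝒜`: the words containing an element of `𝒞` as a contiguous subword. -/
def FmA (L : ℕ) : Set (F n) := { w | ∃ x ∈ Ccal A L, rword x <:+: rword w }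

/-- `S_k`: words of length `k` not containing any element of `𝒞` as a subword. -/
def Sk (L k : ℕ) : Set (F n) := { w | wlen w = k ∧ w ∉ FmA A L }

end System

/-! ### The boundary of `F n` -/

/-- An infinite reduced word. -/
def IsRed {n : ℕ} (ξ : ℕ → Letter n) : Prop := ∀ i, ξ (i + 1) ≠ linv (ξ i)

/-- The Gromov boundary `∂F_n`, realized as the space of infinite reduced words,
topologized as a subspace of the product space. -/
def Boundary (n : ℕ) : Type := { ξ : ℕ → Letter n // IsRed ξ }

instance {n : ℕ} : TopologicalSpace (Boundary n) :=
  instTopologicalSpaceSubtype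

/-- The length-`m` prefix of a boundary point. -/
def bpre {n : ℕ} (ξ : Boundary n) (m : ℕ) : List (Letter n) :=
  (List.range m).map ξ.1

/-- The reduced word of `w` is a prefix of the infinite word `ξ`. -/
def wordPrefixOf {n : ℕ} (w : F n) (ξ : Boundary n) : Prop :=
  bpre ξ (wlen w) = rword w

/-- The boundary (limit set) `∂A ⊆ ∂F_n` of a subgroup `A`. -/
def limitSet {n : ℕ} (A : Subgroup (F n)) : Set (Boundary n) :=
  { ξ | ∀ m : ℕ, ∃ a ∈ A, bpre ξ m <+: rword a }

/-- `ξ = g^{+∞}`: `ξ` is the limit of the reduced words of the powers of `g`. -/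
def IsPosLimit {n : ℕ} (g : F n) (ξ : Boundary n) : Prop :=
  ∀ m : ℕ, ∃ N : ℕ, ∀ k ≥ N, bpre ξ m <+: rword (g ^ k)

/-- The number of letters cancelled when concatenating the word `l` with the
infinite reduced word `ξ`. -/
def cancelLen {n : ℕ} (l : List (Letter n)) (ξ : ℕ → Letter n) : ℕ :=
  sSup { j | j ≤ l.length ∧ ∀ i < j, l.reverse[i]? = some (linv (ξ i)) }

/-- The sequence underlying the action of `g` on a boundary point: left multiplication
followed by cancellation. -/
def actSeq {n : ℕ} (g : F n) (ξ : ℕ → Letter n) : ℕ → Letter n :=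
  fun m =>
    if h : m < (rword g).length - cancelLen (rword g) ξ then
      (rword g).get ⟨m, by omega⟩
    else ξ (m - ((rword g).length - cancelLen (rword g) ξ) + cancelLen (rword g) ξ)

/-- The action of `F n` on its boundary: left multiplication followed by cancellation.
(The sequence `actSeq g ξ.1` is always reduced, so the first branch always applies.) -/
def bAct {n : ℕ} (g : F n) (ξ : Boundary n) : Boundary n :=
  if h : IsRed (actSeq g ξ.1) then ⟨actSeq g ξ.1, h⟩ else ξ

/-! ### The double boundary -/

/-- The diagonal action of `F n` on `Sym2 (∂F_n)`, whose restriction to the set of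
non-diagonal classes is the action on the double boundary `∂²F_n`. -/
def dbAct {n : ℕ} (g : F n) : Sym2 (Boundary n) → Sym2 (Boundary n) := Sym2.map (bAct g)

/-- `∂²𝒜`: the classes `{ξ,η}` with both endpoints in `g·∂A_i = ∂(gA_ig⁻¹)` for some
`i` and `g`. -/
def dblBndA {n r : ℕ} (A : Fin r → Subgroup (F n)) : Set (Sym2 (Boundary n)) :=
  { z | ∃ (i : Fin r) (g : F n) (ξ η : Boundary n), z = s(ξ, η) ∧
      ξ ∈ limitSet (conjSub g (A i)) ∧ η ∈ limitSet (conjSub g (A i)) }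

/-- The double boundary `∂²(F_n,𝒜)` of `F n` relative to `𝒜`, as a subset of
`Sym2 (∂F_n)`: non-diagonal classes not lying in `∂²𝒜`. -/
def relSet {n r : ℕ} (A : Fin r → Subgroup (F n)) : Set (Sym2 (Boundary n)) :=
  { z | ¬ z.IsDiag } \ dblBndA A

/-- The cylinder set `C(γ_w) ⊆ ∂²F_n` of the geodesic path from `1` to `w`. -/
def cylinder {n : ℕ} (w : F n) : Set (Sym2 (Boundary n)) :=
  { z | ∃ ξ η : Boundary n, z = s(ξ, η) ∧ ξ.1 0 ≠ η.1 0 ∧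
      (wordPrefixOf w ξ ∨ wordPrefixOf w η) }

instance {n : ℕ} : MeasurableSpace (Sym2 (Boundary n)) := borel _

/-- The action of `g ∈ F n` on `∂²(F_n,𝒜)`. (The action of `F n` preserves
`∂²(F_n,𝒜)`, so the first branch always applies.) -/
def relAct {n r : ℕ} (A : Fin r → Subgroup (F n)) (g : F n) (z : ↥(relSet A)) :
    ↥(relSet A) :=
  if h : dbAct g z.1 ∈ relSet A then ⟨dbAct g z.1, h⟩ else z

/-- The cylinder `C(γ_w)` as a subset of `∂²(F_n,𝒜)`. -/
def relCyl {n r : ℕ} (A : Fin r → Subgroup (F n)) (w : F n) : Set ↥(relSet A) :=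
  Subtype.val ⁻¹' cylinder w

/-- The translated cylinder `g·C(γ_w)` as a subset of `∂²(F_n,𝒜)`. -/
def relCylG {n r : ℕ} (A : Fin r → Subgroup (F n)) (g w : F n) : Set ↥(relSet A) :=
  Subtype.val ⁻¹' (dbAct g '' cylinder w)

/-- A relative current on `(F_n,𝒜)`: an `F_n`-invariant Radon measure on the
locally compact space `∂²(F_n,𝒜)` (finite on compacts, outer regular, inner regular
on open sets). -/
def IsRelCurrent {n r : ℕ} (A : Fin r → Subgroup (F n)) (μ : Measure ↥(relSet A)) : Prop :=
  (∀ (g : F n) (s : Set ↥(relSet A)), MeasurableSet s → μ (relAct A g ⁻¹' s) = μ s) ∧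
  μ.Regular

/-- The `F_n`-orbit of a point of `Sym2 (∂F_n)`, inside `∂²(F_n,𝒜)`. -/
def orbitOf {n r : ℕ} (A : Fin r → Subgroup (F n)) (z : Sym2 (Boundary n)) :
    Set ↥(relSet A) :=
  { y | ∃ h : F n, (y : Sym2 (Boundary n)) = dbAct h z }

/-! ### Prefixes of reduced words under right multiplication -/

/-- Right multiplication by one letter changes the reduced word only at its last position, so a
prefix that misses the last letter survives, and at most one letter is lost. -/
lemma prefix_mul_letter {n : ℕ} (u : List (Letter n)) (x : F n) (b : Letter n)
    (hu : u <+: rword x) (hlen : u.length + 1 ≤ (rword x).length) :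
    u <+: rword (x * letterE b) ∧ (rword x).length ≤ (rword (x * letterE b)).length + 1 := by
  have hred : FreeGroup.IsReduced (rword x) := FreeGroup.isReduced_toWord
  have hx : FreeGroup.mk (rword x) = x := FreeGroup.mk_toWord
  generalize rword x = w at *
  rcases List.eq_nil_or_concat w with rfl | ⟨v, c, rfl⟩
  · simp at hlen
  rw [List.concat_eq_append] at *
  by_cases hc : c.1 = b.1 → c.2 = b.2
  · have hred' : FreeGroup.IsReduced (v ++ [c] ++ [b]) := by
      refine FreeGroup.IsReduced.append_overlap hred ?_ (by simp)
      simpa [FreeGroup.IsReduced] using hc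
    have hw : rword (x * letterE b) = v ++ [c] ++ [b] := by
      rw [← hx, letterE, FreeGroup.mul_mk, rword, FreeGroup.toWord_mk, hred'.reduce_eq]
    rw [hw]
    exact ⟨hu.trans (List.prefix_append _ _), by simp⟩
  · push Not at hc
    have hcb : c = (b.1, !b.2) := by
      ext
      · exact congrArg _ hc.1
      · have := hc.2
        revert this
        cases c.2 <;> cases b.2 <;> simp
    have hred' : FreeGroup.IsReduced v := hred.infix (List.prefix_append v [c]).isInfix
    have hxb : x * letterE b = FreeGroup.mk v := by
      rw [← hx, letterE, FreeGroup.mul_mk, hcb]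
      apply Quot.sound
      simpa using FreeGroup.Red.Step.not_rev (L₁ := v) (L₂ := []) (x := b.1) (b := b.2)
    have hw : rword (x * letterE b) = v := by
      rw [hxb, rword, FreeGroup.toWord_mk, hred'.reduce_eq]
    rw [hw]
    refine ⟨List.prefix_of_prefix_length_le hu (List.prefix_append v [c]) ?_, by simp⟩
    simpa using hlen

/-- Moving from `x` a distance that does not exceed `|x| - |u|` keeps one in the subtree of the
Cayley tree consisting of the words with prefix `u`. -/
lemma prefix_mul_mk {n : ℕ} (u : List (Letter n)) (L : List (Letter n)) :
    ∀ x : F n, u <+: rword x → u.length + L.length ≤ (rword x).length →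
      u <+: rword (x * FreeGroup.mk L) := by
  induction L with
  | nil =>
    intro x hu _
    rwa [← FreeGroup.one_eq_mk, mul_one]
  | cons b L ih =>
    intro x hu hlen
    rw [List.length_cons] at hlen
    obtain ⟨h1, h2⟩ := prefix_mul_letter u x b hu (by omega)
    have := ih (x * letterE b) h1 (by omega)
    rwa [letterE, mul_assoc, FreeGroup.mul_mk] at this

lemma prefix_mul {n : ℕ} (u : List (Letter n)) (x s : F n) (hu : u <+: rword x)
    (hlen : u.length + wlen s ≤ wlen x) : u <+: rword (x * s) := by
  have := prefix_mul_mk u (rword s) x hu hlen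
  rwa [show FreeGroup.mk (rword s) = s from FreeGroup.mk_toWord] at this

/-! ### Local finiteness of the conjugates of a finitely generated subgroup -/

lemma wlen_inv {n : ℕ} (s : F n) : wlen s⁻¹ = wlen s := FreeGroup.norm_inv_eq

/-- If some vertices of the coset `gA` lie in the subtree of words with prefix `u` and others do
not, then a path through `gA` with jumps of length at most `R` (the longest generator of `A`) has
to enter the subtree near its root: some vertex of `gA` has length at most `|u| + R`. -/
lemma exists_short_coset_rep {n : ℕ} (A : Subgroup (F n)) (hA : A.FG) :
    ∃ R : ℕ, ∀ (g a₁ a₂ : F n) (u : List (Letter n)), a₁ ∈ A → a₂ ∈ A →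
      u <+: rword (g * a₁) → ¬ u <+: rword (g * a₂) →
      ∃ a ∈ A, wlen (g * a) ≤ u.length + R := by
  obtain ⟨S, rfl⟩ := hA
  refine ⟨S.sup wlen, fun g a₁ a₂ u ha₁ ha₂ h₁ h₂ => ?_⟩
  by_contra! hlong
  refine h₂ ?_
  -- Long vertices of the coset with prefix `u` keep this prefix under every generator.
  have key : ∀ a ∈ Subgroup.closure (S : Set (F n)), u <+: rword (g * a₁ * a) := by
    intro a ha
    induction ha using Subgroup.closure_induction_right with
    | one => simpa using h₁
    | mul_right x hx y hy ih =>
      have hy' : wlen y ≤ S.sup wlen := Finset.le_sup hy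
      have := hlong (a₁ * x) (mul_mem ha₁ hx)
      rw [← mul_assoc] at this ⊢
      exact prefix_mul u _ y ih (by omega)
    | mul_inv_cancel x hx y hy ih =>
      have hy' : wlen y ≤ S.sup wlen := Finset.le_sup hy
      have := hlong (a₁ * x) (mul_mem ha₁ hx)
      rw [← mul_assoc] at this ⊢
      exact prefix_mul u _ y⁻¹ ih (by rw [wlen_inv]; omega)
  simpa [mul_assoc] using key (a₁⁻¹ * a₂) (mul_mem (inv_mem ha₁) ha₂)

lemma conjSub_mul {n : ℕ} (A : Subgroup (F n)) (g a : F n) (ha : a ∈ A) :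
    conjSub (g * a) A = conjSub g A := by
  ext x
  simp only [conjSub, Subgroup.mem_map, MulEquiv.coe_toMonoidHom, MulAut.conj_apply]
  constructor
  · rintro ⟨y, hy, rfl⟩
    exact ⟨a * y * a⁻¹, mul_mem (mul_mem ha hy) (inv_mem ha), by group⟩
  · rintro ⟨y, hy, rfl⟩
    exact ⟨a⁻¹ * y * a, mul_mem (mul_mem (inv_mem ha) hy) ha, by group⟩

@[simp] lemma length_bpre {n : ℕ} (ξ : Boundary n) (m : ℕ) : (bpre ξ m).length = m := by
  simp [bpre]

lemma bpre_prefix {n : ℕ} (ξ : Boundary n) {k m : ℕ} (h : k ≤ m) : bpre ξ k <+: bpre ξ m := by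
  obtain ⟨d, rfl⟩ := Nat.exists_eq_add_of_le h
  simp [bpre, List.range_add]

/-- The limit set of `gAg⁻¹` is approximated by the coset `gA` as well. -/
lemma exists_coset_prefix {n : ℕ} (A : Subgroup (F n)) (g : F n) (ξ : Boundary n)
    (hξ : ξ ∈ limitSet (conjSub g A)) (k : ℕ) : ∃ a ∈ A, bpre ξ k <+: rword (g * a) := by
  obtain ⟨b, hb, hpre⟩ := hξ (k + wlen g)
  obtain ⟨a, ha, rfl⟩ := hb
  simp only [MulEquiv.coe_toMonoidHom, MulAut.conj_apply] at hpre
  refine ⟨a, ha, ?_⟩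
  have := prefix_mul (bpre ξ k) (g * a * g⁻¹) g ((bpre_prefix ξ (by omega)).trans hpre)
    (by simpa [wlen] using hpre.length_le)
  simpa using this

/-- Local finiteness: a conjugate of `A` whose limit set contains two points that differ at
position `k` is the conjugate by an element of length at most `k + 1 + R`. For fixed `k` there are
only finitely many such conjugates. -/
lemma exists_short_conj {n : ℕ} (A : Subgroup (F n)) (hA : A.FG) :
    ∃ R : ℕ, ∀ (g : F n) (ξ η : Boundary n) (k : ℕ), ξ.1 k ≠ η.1 k →
      ξ ∈ limitSet (conjSub g A) → η ∈ limitSet (conjSub g A) →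
      ∃ h : F n, wlen h ≤ k + 1 + R ∧ conjSub h A = conjSub g A := by
  obtain ⟨R, hR⟩ := exists_short_coset_rep A hA
  refine ⟨R, fun g ξ η k hk hξ hη => ?_⟩
  obtain ⟨a₁, ha₁, h₁⟩ := exists_coset_prefix A g ξ hξ (k + 1)
  obtain ⟨a₂, ha₂, h₂⟩ := exists_coset_prefix A g η hη (k + 1)
  obtain ⟨a, ha, hlen⟩ := hR g a₁ a₂ (bpre ξ (k + 1)) ha₁ ha₂ h₁ (by
    intro h
    have heq : bpre ξ (k + 1) = bpre η (k + 1) :=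
      (List.prefix_of_prefix_length_le h h₂ (by simp)).eq_of_length (by simp)
    apply hk
    have := congrArg (fun l => l[k]?) heq
    simpa [bpre] using this)
  exact ⟨g * a, by simpa using hlen, conjSub_mul A g a ha⟩

lemma finite_wlen_le (n N : ℕ) : {h : F n | wlen h ≤ N}.Finite :=
  (List.finite_length_le (Letter n) N).preimage
    (FreeGroup.toWord_injective (α := Fin n)).injOn

/-! ### Topology of the boundary and of the space of unordered pairs -/

lemma continuous_letter {n : ℕ} (k : ℕ) : Continuous fun ξ : Boundary n => ξ.1 k :=
  (continuous_apply k).comp continuous_subtype_val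

lemma isLocallyConstant_bpre {n : ℕ} (m : ℕ) :
    IsLocallyConstant fun ξ : Boundary n => bpre ξ m := by
  induction m with
  | zero => exact IsLocallyConstant.const []
  | succ m ih =>
    have h := ih.comp₂ ((IsLocallyConstant.iff_continuous _).2 (continuous_letter m))
      fun l c => l ++ [c]
    simpa [bpre, List.range_succ] using h

lemma isClosed_limitSet {n : ℕ} (B : Subgroup (F n)) : IsClosed (limitSet B) := by
  have : limitSet B = ⋂ m, (fun ξ => bpre ξ m) ⁻¹' {l | ∃ a ∈ B, l <+: rword a} := by
    ext ξ
    simp [limitSet]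
  rw [this]
  exact isClosed_iInter fun m => ⟨(isLocallyConstant_bpre m) {l | ∃ a ∈ B, l <+: rword a}ᶜ⟩

instance compactSpace_boundary {n : ℕ} : CompactSpace (Boundary n) := by
  have : IsClosed {ξ : ℕ → Letter n | IsRed ξ} := by
    simp only [IsRed, Set.ofPred_forall]
    refine isClosed_iInter fun i => ?_
    have hc : Continuous fun ξ : ℕ → Letter n => (ξ (i + 1), ξ i) :=
      (continuous_apply (i + 1)).prodMk (continuous_apply i)
    exact (isClosed_discrete {p : Letter n × Letter n | p.1 ≠ linv p.2}).preimage hc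
  exact isCompact_iff_compactSpace.1 this.isCompact

instance t2Space_boundary {n : ℕ} : T2Space (Boundary n) :=
  inferInstanceAs (T2Space { ξ : ℕ → Letter n // IsRed ξ })

/-- The map from ordered to unordered pairs is open, since the saturation of an open set `U` is the
union of `U` and its image under the flip. -/
lemma isOpenQuotientMap_sym2 (X : Type*) [TopologicalSpace X] :
    IsOpenQuotientMap (fun p : X × X => s(p.1, p.2)) where
  surjective := Quot.mk_surjective
  continuous := continuous_quot_mk
  isOpenMap U hU := by
    rw [← (isQuotientMap_quot_mk (r := Sym2.Rel X)).isOpen_preimage]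
    have : Quot.mk (Sym2.Rel X) ⁻¹' ((fun p : X × X => s(p.1, p.2)) '' U) = U ∪ Prod.swap ⁻¹' U := by
      ext ⟨x, y⟩
      constructor
      · rintro ⟨⟨a, b⟩, hab, h⟩
        have h' : s(a, b) = s(x, y) := h
        rcases Sym2.eq_iff.1 h' with ⟨rfl, rfl⟩ | ⟨rfl, rfl⟩
        · exact Or.inl hab
        · exact Or.inr hab
      · rintro (h | h)
        · exact ⟨_, h, rfl⟩
        · exact ⟨_, h, Sym2.eq_swap⟩
    rw [this]
    exact hU.union (hU.preimage continuous_swap)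

lemma mem_dblBndA_iff {n r : ℕ} (A : Fin r → Subgroup (F n)) (ξ η : Boundary n) :
    s(ξ, η) ∈ dblBndA A ↔ ∃ (i : Fin r) (g : F n),
      ξ ∈ limitSet (conjSub g (A i)) ∧ η ∈ limitSet (conjSub g (A i)) := by
  constructor
  · rintro ⟨i, g, ξ', η', h, h₁, h₂⟩
    rcases Sym2.eq_iff.1 h with ⟨rfl, rfl⟩ | ⟨rfl, rfl⟩
    · exact ⟨i, g, h₁, h₂⟩
    · exact ⟨i, g, h₂, h₁⟩
  · rintro ⟨i, g, h₁, h₂⟩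
    exact ⟨i, g, ξ, η, rfl, h₁, h₂⟩

lemma isOpen_relSet {n r : ℕ} (A : Fin r → Subgroup (F n)) (hA : ∀ i, (A i).FG) :
    IsOpen (relSet A) := by
  rw [← (isOpenQuotientMap_sym2 (Boundary n)).isQuotientMap.isOpen_preimage]
  choose R hR using fun i => exists_short_conj (A i) (hA i)
  -- On the open set of pairs differing at position `k`, only the finitely many conjugates by
  -- elements of length at most `k + 1 + R i` have to be avoided.
  have hunion : (fun p : Boundary n × Boundary n => s(p.1, p.2)) ⁻¹' relSet A = ⋃ k : ℕ,
      {p : Boundary n × Boundary n | p.1.1 k ≠ p.2.1 k} ∩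
        (⋃ i : Fin r, ⋃ h ∈ {h : F n | wlen h ≤ k + 1 + R i},
          limitSet (conjSub h (A i)) ×ˢ limitSet (conjSub h (A i)))ᶜ := by
    ext ⟨ξ, η⟩
    have hmem : (ξ, η) ∈ (fun p : Boundary n × Boundary n => s(p.1, p.2)) ⁻¹' relSet A ↔
        ξ ≠ η ∧ s(ξ, η) ∉ dblBndA A := by
      simp [relSet]
    rw [hmem, mem_dblBndA_iff]
    simp only [Set.mem_iUnion, Set.mem_inter_iff, Set.mem_ofPred_eq, Set.mem_compl_iff,
      Set.mem_prod]
    constructor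
    · rintro ⟨hne, hnot⟩
      obtain ⟨k, hk⟩ := Function.ne_iff.1 fun h : ξ.1 = η.1 => hne (Subtype.ext h)
      exact ⟨k, hk, fun ⟨i, h, _, h'⟩ => hnot ⟨i, h, h'⟩⟩
    · rintro ⟨k, hk, hnot⟩
      refine ⟨fun h => hk (by rw [h]), ?_⟩
      rintro ⟨i, g, hξ, hη⟩
      obtain ⟨h, hlen, heq⟩ := hR i g ξ η k hk hξ hη
      exact hnot ⟨i, h, hlen, by rw [heq]; exact ⟨hξ, hη⟩⟩
  rw [hunion]
  refine isOpen_iUnion fun k => IsOpen.inter ?_ ?_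
  · exact (isOpen_discrete {p : Letter n × Letter n | p.1 ≠ p.2}).preimage
      (((continuous_letter k).comp continuous_fst).prodMk
        ((continuous_letter k).comp continuous_snd))
  · rw [isOpen_compl_iff]
    exact isClosed_iUnion_of_finite fun i => (finite_wlen_le n _).isClosed_biUnion fun h _ =>
      (isClosed_limitSet _).prod (isClosed_limitSet _)

/-- The relative double boundary ∂²(F_n,𝒜) is locally compact. -/
theorem statement_6 (n r : ℕ) (hn : 2 ≤ n) (A : Fin r → Subgroup (F n))
    (hsys : IsSystem A) (hmal : SystemMalnormal A) :
    LocallyCompactSpace ↥(relSet A) := by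
  have : LocallyCompactSpace (Sym2 (Boundary n)) :=
    (isOpenQuotientMap_sym2 (Boundary n)).locallyCompactSpace
  exact (isOpen_relSet A hsys.1).locallyCompactSpace

end RelCurr
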